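/- Let (P, {-,-}, s) be a Poisson superalgebra over a field K of characteristic 2, let (P_k[[t]], μ_(k), ω_(k)) be a formal deformation of order k of P, and let (μ_{k+1}, ω_{k+1}) be an even Poisson 2-cochain of P. Then (P_{k+1}[[t]], μ_(k+1), ω_(k+1)), where μ_(k+1) = μ_(k) + t^{k+1}μ_{k+1} and ω_(k+1) = ω_(k) + t^{k+1}ω_{k+1}, is a formal deformation of order k+1 of P if and only if (Obs¹_{k+1}, Obs²_{k+1}) = d²_po(μ_{k+1}, ω_{k+1}). -/

import Mathlib

/-!
Every `(μ_a, ω_a)` is an even Poisson 2-cochain, and so is the undeformed pair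
`({-,-}, s) = (μ_0, ω_0)`. This alone gives all axioms of a Poisson superalgebra on
`P[[t]]/(t^{m+1})` except the Jacobi identity and `{s(x), z} = {x, {x, z}}`. Those two
expressions are additive in each argument, up to polarization: replacing `x` by `x + y` in
the second produces a Jacobi expression. Hence they can be tested on monomials `x tⁱ`, where
they become `∑ J_n t^{n + …}` and `∑ S_n t^{n + …}`, with `J_n`, `S_n` the sums over
`a + b = n` of the compositions of `(μ_a, ω_a)` with `(μ_b, ω_b)`. Conversely `J_n` and `S_n`
are recovered as the coefficients of `tⁿ` on constant arguments. So the truncated structure is a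
Poisson superalgebra if and only if `J_n = 0` and `S_n = 0` for `n ≤ m`
(`isPoisson2_trunc_iff`).

Recovering `J_n = 0` uses the Jacobi identity for arbitrary triples, which follows from the
axioms by polarizing the squaring identity (`IsLieSuper2.jacobi`).

Passing from `k` to `k + 1` adds only the conditions `J_{k+1} = 0` and `S_{k+1} = 0`. In these
sums the terms with `a = 0` or `b = 0` form `d²(μ_{k+1}, ω_{k+1})` and the others form the
obstruction; in characteristic 2, a sum is zero exactly when its two parts are equal.
-/

/-- A Lie superalgebra over a field of characteristic 2, encoded as a predicate on the
data: a `ℤ/2`-grading given by complementary submodules `ev` and `od`, a bilinear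
symmetric bracket `br` (in characteristic 2 skew-symmetry is symmetry), and a squaring
`sq : L → L` whose value is only relevant on `od`. -/
structure IsLieSuper2 (K : Type*) [Field K] {L : Type*} [AddCommGroup L] [Module K L]
    (ev od : Submodule K L) (br : L → L → L) (sq : L → L) : Prop where
  compl : IsCompl ev od
  add_left : ∀ x y z : L, br (x + y) z = br x z + br y z
  smul_left : ∀ (c : K) (x y : L), br (c • x) y = c • br x y
  symm : ∀ x y : L, br x y = br y x
  alt_ev : ∀ x ∈ ev, br x x = 0
  grade_ee : ∀ x ∈ ev, ∀ y ∈ ev, br x y ∈ ev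
  grade_eo : ∀ x ∈ ev, ∀ y ∈ od, br x y ∈ od
  grade_oo : ∀ x ∈ od, ∀ y ∈ od, br x y ∈ ev
  jacobi_ev : ∀ x ∈ ev, ∀ y ∈ ev, ∀ z : L,
    br (br x y) z = br x (br y z) + br y (br x z)
  sq_mem : ∀ x ∈ od, sq x ∈ ev
  sq_smul : ∀ (c : K), ∀ x ∈ od, sq (c • x) = (c * c) • sq x
  sq_add : ∀ x ∈ od, ∀ y ∈ od, sq (x + y) = sq x + sq y + br x y
  sq_jacobi : ∀ x ∈ od, ∀ z : L, br (sq x) z = br x (br x z)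
/-- An associative supercommutative superalgebra over a field of characteristic 2,
encoded as a predicate on the data: complementary submodules `ev`, `od` and a bilinear
associative commutative product `mul` with `a² = 0` for odd `a`. -/
structure IsSuperComm2 (K : Type*) [Field K] {A : Type*} [AddCommGroup A] [Module K A]
    (ev od : Submodule K A) (mul : A → A → A) : Prop where
  compl : IsCompl ev od
  add_left : ∀ a b c : A, mul (a + b) c = mul a c + mul b c
  smul_left : ∀ (k : K) (a b : A), mul (k • a) b = k • mul a b
  comm : ∀ a b : A, mul a b = mul b a
  assoc : ∀ a b c : A, mul (mul a b) c = mul a (mul b c)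
  alt_od : ∀ a ∈ od, mul a a = 0
  grade_ee : ∀ a ∈ ev, ∀ b ∈ ev, mul a b ∈ ev
  grade_eo : ∀ a ∈ ev, ∀ b ∈ od, mul a b ∈ od
  grade_oo : ∀ a ∈ od, ∀ b ∈ od, mul a b ∈ ev
/-- A Poisson superalgebra in characteristic 2: a Lie superalgebra together with an
associative supercommutative product satisfying the Leibniz rule and the compatibility
of the squaring with the product. -/
structure IsPoisson2 (K : Type*) [Field K] {P : Type*} [AddCommGroup P] [Module K P]
    (ev od : Submodule K P) (mul br : P → P → P) (sq : P → P) : Prop where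
  commAlg : IsSuperComm2 K ev od mul
  lieAlg : IsLieSuper2 K ev od br sq
  leibniz : ∀ x y z : P, br (mul x y) z = mul x (br y z) + mul (br x z) y
  sq_mul : ∀ x ∈ ev, ∀ y ∈ od,
    sq (mul x y) = mul (mul x x) (sq y) + mul (mul x y) (br x y)
section DeformationTheory
variable (K : Type*) [Field K] {P : Type*} [AddCommGroup P] [Module K P]

/-- A Poisson 2-cochain `(φ, ω)` of a Poisson superalgebra in characteristic 2,
written in curried form. -/
structure IsPoisson2Cochain2 (ev od : Submodule K P) (mul : P → P → P)
    (φ : P → P → P) (ω : P → P) : Prop where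
  φ_add_left : ∀ x y z : P, φ (x + y) z = φ x z + φ y z
  φ_smul_left : ∀ (c : K) (x z : P), φ (c • x) z = c • φ x z
  φ_add_right : ∀ x y z : P, φ x (y + z) = φ x y + φ x z
  φ_smul_right : ∀ (c : K) (x z : P), φ x (c • z) = c • φ x z
  φ_alt : ∀ x : P, φ x x = 0
  φ_der : ∀ x y z : P, φ (mul x y) z = mul x (φ y z) + mul y (φ x z)
  ω_smul : ∀ (c : K), ∀ x ∈ od, ω (c • x) = (c * c) • ω x
  ω_polar : ∀ x ∈ od, ∀ y ∈ od, ω (x + y) = ω x + ω y + φ x y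
  ω_mul : ∀ x ∈ od, ∀ y ∈ ev,
    ω (mul x y) = mul (mul y y) (ω x) + mul (mul x y) (φ x y)

/-- A Poisson 3-cochain `(φ, ω)` of a Poisson superalgebra in characteristic 2,
written in curried form. -/
structure IsPoisson2Cochain3 (ev od : Submodule K P) (mul : P → P → P)
    (φ : P → P → P → P) (ω : P → P → P) : Prop where
  φ_add1 : ∀ x x' y z : P, φ (x + x') y z = φ x y z + φ x' y z
  φ_smul1 : ∀ (c : K) (x y z : P), φ (c • x) y z = c • φ x y z
  φ_add2 : ∀ x y y' z : P, φ x (y + y') z = φ x y z + φ x y' z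
  φ_smul2 : ∀ (c : K) (x y z : P), φ x (c • y) z = c • φ x y z
  φ_add3 : ∀ x y z z' : P, φ x y (z + z') = φ x y z + φ x y z'
  φ_smul3 : ∀ (c : K) (x y z : P), φ x y (c • z) = c • φ x y z
  φ_alt12 : ∀ x z : P, φ x x z = 0
  φ_alt23 : ∀ x y : P, φ x y y = 0
  φ_alt13 : ∀ x y : P, φ x y x = 0
  φ_der : ∀ x y z w : P, φ (mul x y) z w = mul x (φ y z w) + mul y (φ x z w)
  ω_smul : ∀ (c : K), ∀ x ∈ od, ∀ z : P, ω (c • x) z = (c * c) • ω x z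
  ω_polar : ∀ x ∈ od, ∀ y ∈ od, ∀ z : P, ω (x + y) z = ω x z + ω y z + φ x y z
  ω_add2 : ∀ x z z' : P, ω x (z + z') = ω x z + ω x z'
  ω_smul2 : ∀ (x : P) (c : K) (z : P), ω x (c • z) = c • ω x z
  ω_mul : ∀ x ∈ od, ∀ y ∈ ev, ∀ z : P,
    ω (mul x y) z = mul (mul y y) (ω x z) + mul (mul x y) (φ x y z)
  ω_der2 : ∀ x z z' : P, ω x (mul z z') = mul z (ω x z') + mul z' (ω x z)

/-- `pt ev od false = ev` and `pt ev od true = od`: the homogeneous component of a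
given parity. -/
def pt (ev od : Submodule K P) : Bool → Submodule K P := fun b => bif b then od else ev

/-- A Poisson 2-cochain is even if `φ` preserves the grading (then `ω` takes odd
elements to even ones). -/
def Cochain2Even (ev od : Submodule K P) (φ : P → P → P) (ω : P → P) : Prop :=
  (∀ (b1 b2 : Bool), ∀ x ∈ pt K ev od b1, ∀ y ∈ pt K ev od b2,
    φ x y ∈ pt K ev od (xor b1 b2)) ∧
  (∀ x ∈ od, ω x ∈ ev)

/-- A Poisson 3-cochain is even if `φ` preserves the grading. -/
def Cochain3Even (ev od : Submodule K P) (φ : P → P → P → P) (ω : P → P → P) : Prop :=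
  (∀ (b1 b2 b3 : Bool), ∀ x ∈ pt K ev od b1, ∀ y ∈ pt K ev od b2, ∀ z ∈ pt K ev od b3,
    φ x y z ∈ pt K ev od (xor b1 (xor b2 b3))) ∧
  (∀ (b : Bool), ∀ x ∈ od, ∀ z ∈ pt K ev od b, ω x z ∈ pt K ev od b)

end DeformationTheory

section Truncations
variable {P : Type*} [AddCommGroup P]

/-- The product of `P_k[[t]] = P[[t]]/(t^{k+1})`, realized on coefficient tuples
`Fin (k+1) → P` by convolution. -/
def truncMul (mul : P → P → P) (k : ℕ) (f g : Fin (k + 1) → P) : Fin (k + 1) → P :=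
  fun r => ∑ i : Fin (k + 1), ∑ j : Fin (k + 1),
    if (i : ℕ) + (j : ℕ) = (r : ℕ) then mul (f i) (g j) else 0

/-- The deformed bracket `μ_t = Σ tᵃ μ_a` (with `μ_0` the original bracket) on
coefficient tuples. -/
def truncBr (μ : ℕ → P → P → P) (k : ℕ) (f g : Fin (k + 1) → P) : Fin (k + 1) → P :=
  fun r => ∑ a ∈ Finset.range (k + 1), ∑ i : Fin (k + 1), ∑ j : Fin (k + 1),
    if a + (i : ℕ) + (j : ℕ) = (r : ℕ) then μ a (f i) (g j) else 0

/-- The deformed squaring `ω_t = Σ tᵃ ω_a` (with `ω_0` the original squaring) on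
coefficient tuples; quadratic terms use the polar forms `μ_a`. -/
def truncSq (μ : ℕ → P → P → P) (ωs : ℕ → P → P) (k : ℕ) (f : Fin (k + 1) → P) :
    Fin (k + 1) → P :=
  fun r =>
    (∑ a ∈ Finset.range (k + 1), ∑ b : Fin (k + 1),
      if a + 2 * (b : ℕ) = (r : ℕ) then ωs a (f b) else 0) +
    ∑ a ∈ Finset.range (k + 1), ∑ b : Fin (k + 1), ∑ c : Fin (k + 1),
      if a + (b : ℕ) + (c : ℕ) = (r : ℕ) ∧ (b : ℕ) < (c : ℕ) then μ a (f b) (f c) else 0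

end Truncations

section DeformationTheory2
variable (K : Type*) [Field K] {P : Type*} [AddCommGroup P] [Module K P]

/-- A formal deformation of order `k` of the Poisson superalgebra
`(P, mul, br, sq)`: coefficient maps `μ_i, ω_i` for `1 ≤ i ≤ k` which are even
Poisson 2-cochains, extending `μ_0 = br`, `ω_0 = sq`, such that the truncated
structure is a Poisson superalgebra on `P[[t]]/(t^{k+1})` in characteristic 2. -/
def IsDeformation (ev od : Submodule K P) (mul br : P → P → P) (sq : P → P)
    (k : ℕ) (μ : ℕ → P → P → P) (ωs : ℕ → P → P) : Prop :=
  μ 0 = br ∧ ωs 0 = sq ∧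
  (∀ i, 1 ≤ i → i ≤ k →
    IsPoisson2Cochain2 K ev od mul (μ i) (ωs i) ∧ Cochain2Even K ev od (μ i) (ωs i)) ∧
  IsPoisson2 K
    (Submodule.pi Set.univ fun _ : Fin (k + 1) => ev)
    (Submodule.pi Set.univ fun _ : Fin (k + 1) => od)
    (truncMul mul k) (truncBr μ k) (truncSq μ ωs k)

end DeformationTheory2

section TruncationLemmas

/-- The monomial `x tⁱ` of `P[[t]]/(t^{m+1})`. The exponent is a natural number, and the
monomial is zero when `i > m`. -/
def mon {P : Type*} [AddCommGroup P] (m i : ℕ) (x : P) : Fin (m + 1) → P :=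
  fun r => if i = (r : ℕ) then x else 0

/-- `J_n(x, y, z)`, the coefficient of `tⁿ` in the Jacobi expression of the deformed bracket. -/
def jac {P : Type*} [AddCommGroup P] (μ : ℕ → P → P → P) (n : ℕ) (x y z : P) : P :=
  ∑ p ∈ Finset.HasAntidiagonal.antidiagonal n,
    (μ p.1 (μ p.2 x y) z + μ p.1 x (μ p.2 y z) + μ p.1 y (μ p.2 x z))

/-- `S_n(x, z)`, the coefficient of `tⁿ` in `{s(x), z} + {x, {x, z}}` for the deformed
structure. -/
def sqJac {P : Type*} [AddCommGroup P] (μ : ℕ → P → P → P) (ωs : ℕ → P → P) (n : ℕ)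
    (x z : P) : P :=
  ∑ p ∈ Finset.HasAntidiagonal.antidiagonal n, (μ p.1 (ωs p.2 x) z + μ p.1 x (μ p.2 x z))

lemma add_self_of_char_two (K : Type*) {P : Type*} [Field K] [CharP K 2] [AddCommGroup P]
    [Module K P] (x : P) : x + x = 0 := by
  rw [← two_smul K x, show (2 : K) = 0 from CharTwo.two_eq_zero, zero_smul]

lemma eq_of_add_eq_zero (K : Type*) {P : Type*} [Field K] [CharP K 2] [AddCommGroup P]
    [Module K P] {x y : P} (h : x + y = 0) : x = y := by
  linear_combination (norm := abel) h - add_self_of_char_two K y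

lemma zero_of_add {A B : Type*} [AddCommGroup A] [AddCommGroup B] {f : A → B}
    (h : ∀ x y, f (x + y) = f x + f y) : f 0 = 0 := map_zero (AddMonoidHom.mk' f h)

lemma sum_of_add {A B ι : Type*} [AddCommGroup A] [AddCommGroup B] {f : A → B}
    (h : ∀ x y, f (x + y) = f x + f y) (s : Finset ι) (g : ι → A) :
    f (∑ i ∈ s, g i) = ∑ i ∈ s, f (g i) := map_sum (AddMonoidHom.mk' f h) g s

variable {K P : Type*} [Field K] [AddCommGroup P] [Module K P]

/-! ### Monomials -/

lemma mon_eq_zero {m i : ℕ} (h : m < i) (x : P) : mon m i x = 0 := by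
  funext r
  have : i ≠ (r : ℕ) := by omega
  simp [mon, this]

lemma mon_zero (m i : ℕ) : mon m i (0 : P) = 0 := by
  funext r; simp [mon]

lemma mon_add (m i : ℕ) (x y : P) : mon m i (x + y) = mon m i x + mon m i y := by
  funext r
  simp only [mon, Pi.add_apply]
  split_ifs <;> simp

lemma mon_mem (N : Submodule K P) (m i : ℕ) {x : P} (hx : x ∈ N) :
    mon m i x ∈ Submodule.pi Set.univ fun _ : Fin (m + 1) => N := by
  intro r _
  simp only [mon]
  split_ifs
  exacts [hx, N.zero_mem]

lemma eq_sum_mon (m : ℕ) (f : Fin (m + 1) → P) : f = ∑ i : Fin (m + 1), mon m (i : ℕ) (f i) := by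
  funext r
  simp only [mon, Finset.sum_apply, Fin.val_inj]
  simp

/-- A property of elements of `N[[t]]/(t^{m+1})` that is stable under addition may be
checked on monomials. -/
lemma mon_induction (N : Submodule K P) (m : ℕ) (p : (Fin (m + 1) → P) → Prop)
    (hadd : ∀ f ∈ Submodule.pi Set.univ fun _ : Fin (m + 1) => N,
      ∀ g ∈ Submodule.pi Set.univ fun _ : Fin (m + 1) => N, p f → p g → p (f + g))
    (hmon : ∀ i, ∀ x ∈ N, p (mon m i x)) :
    ∀ f ∈ Submodule.pi Set.univ fun _ : Fin (m + 1) => N, p f := by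
  intro f hf
  have key : ∀ s : Finset (Fin (m + 1)),
      (∑ i ∈ s, mon m (i : ℕ) (f i)) ∈ (Submodule.pi Set.univ fun _ : Fin (m + 1) => N) ∧
      p (∑ i ∈ s, mon m (i : ℕ) (f i)) := by
    intro s
    induction s using Finset.induction_on with
    | empty =>
      refine ⟨by simp, ?_⟩
      rw [Finset.sum_empty, ← mon_zero m 0]
      exact hmon 0 0 N.zero_mem
    | insert a s ha ih =>
      rw [Finset.sum_insert ha]
      have hm := mon_mem N m a (hf a (Set.mem_univ _))
      exact ⟨Submodule.add_mem _ hm ih.1,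
        hadd _ hm _ ih.1 (hmon a _ (hf a (Set.mem_univ _))) ih.2⟩
  have := (key Finset.univ).2
  rwa [← eq_sum_mon] at this

lemma mon_induction_top (K : Type*) {P : Type*} [Field K] [AddCommGroup P] [Module K P] (m : ℕ) (p : (Fin (m + 1) → P) → Prop)
    (hadd : ∀ f g, p f → p g → p (f + g)) (hmon : ∀ i x, p (mon m i x)) : ∀ f, p f := by
  intro f
  have hmem : f ∈ Submodule.pi Set.univ fun _ : Fin (m + 1) => (⊤ : Submodule K P) :=
    fun _ _ => trivial
  exact mon_induction _ m p (fun f _ g _ => hadd f g) (fun i x _ => hmon i x) f hmem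

lemma sum_sum_mon (m c : ℕ) (F : ℕ → ℕ → P) :
    ∑ a ∈ Finset.range (m + 1), ∑ b ∈ Finset.range (m + 1), mon m (a + b + c) (F a b) =
      ∑ n ∈ Finset.range (m + 1), mon m (n + c) (∑ p ∈ Finset.HasAntidiagonal.antidiagonal n, F p.1 p.2) := by
  have h1 : ∀ n, mon m (n + c) (∑ p ∈ Finset.HasAntidiagonal.antidiagonal n, F p.1 p.2) =
      ∑ p ∈ Finset.HasAntidiagonal.antidiagonal n, mon m (p.1 + p.2 + c) (F p.1 p.2) := by
    intro n
    rw [sum_of_add (f := mon m (n + c)) (mon_add m (n + c))]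
    refine Finset.sum_congr rfl fun p hp => ?_
    rw [Finset.HasAntidiagonal.mem_antidiagonal.1 hp]
  simp_rw [h1]
  rw [← Finset.sum_product', Finset.sum_sigma']
  symm
  refine Finset.sum_of_injOn (fun q => q.2) ?_ ?_ ?_ ?_
  · rintro ⟨n, p⟩ hp ⟨n', p'⟩ hp' h
    simp only [Finset.coe_sigma, Set.mem_sigma_iff, Finset.mem_coe, Finset.HasAntidiagonal.mem_antidiagonal] at hp hp'
    obtain ⟨_, rfl⟩ := hp
    obtain ⟨_, rfl⟩ := hp'
    simp only at h
    subst h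
    rfl
  · rintro ⟨n, p⟩ hp
    simp only [Finset.coe_sigma, Set.mem_sigma_iff, Finset.mem_coe, Finset.HasAntidiagonal.mem_antidiagonal,
      Finset.mem_range] at hp
    simp only [Finset.coe_product, Set.mem_prod, Finset.mem_coe, Finset.mem_range]
    omega
  · rintro ⟨a, b⟩ _ hn
    apply mon_eq_zero
    by_contra hlt
    exact hn ⟨⟨a + b, (a, b)⟩, by
      simp
      omega, rfl⟩
  · rintro ⟨n, p⟩ _
    rfl

/-! ### The truncated product -/

section Mul
variable {ev od : Submodule K P} {mul : P → P → P}

lemma IsSuperComm2.add_right (h : IsSuperComm2 K ev od mul) (a b c : P) :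
    mul a (b + c) = mul a b + mul a c := by
  rw [h.comm, h.add_left, h.comm b, h.comm c]

lemma IsSuperComm2.mul_zero (h : IsSuperComm2 K ev od mul) (a : P) : mul a 0 = 0 :=
  zero_of_add (h.add_right a)

lemma IsSuperComm2.zero_mul (h : IsSuperComm2 K ev od mul) (a : P) : mul 0 a = 0 := by
  rw [h.comm, h.mul_zero]

lemma truncMul_comm (h : IsSuperComm2 K ev od mul) (m : ℕ) (f g : Fin (m + 1) → P) :
    truncMul mul m f g = truncMul mul m g f := by
  funext r
  simp only [truncMul]
  rw [Finset.sum_comm]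
  refine Finset.sum_congr rfl fun i _ => Finset.sum_congr rfl fun j _ => ?_
  rw [h.comm, add_comm]

lemma truncMul_add_left (h : IsSuperComm2 K ev od mul) (m : ℕ) (f f' g : Fin (m + 1) → P) :
    truncMul mul m (f + f') g = truncMul mul m f g + truncMul mul m f' g := by
  funext r
  simp only [truncMul, Pi.add_apply, ← Finset.sum_add_distrib]
  refine Finset.sum_congr rfl fun i _ => Finset.sum_congr rfl fun j _ => ?_
  split_ifs
  · exact h.add_left _ _ _
  · simp

lemma truncMul_add_right (h : IsSuperComm2 K ev od mul) (m : ℕ) (f g g' : Fin (m + 1) → P) :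
    truncMul mul m f (g + g') = truncMul mul m f g + truncMul mul m f g' := by
  rw [truncMul_comm h, truncMul_add_left h, truncMul_comm h m g, truncMul_comm h m g']

lemma truncMul_mon (h : IsSuperComm2 K ev od mul) (m i j : ℕ) (x y : P) :
    truncMul mul m (mon m i x) (mon m j y) = mon m (i + j) (mul x y) := by
  have h0 := h.mul_zero
  have h0' := h.zero_mul
  by_cases hi : m < i
  · rw [mon_eq_zero hi, mon_eq_zero (i := i + j) (by omega)]
    funext r; simp [truncMul, h0']
  by_cases hj : m < j
  · rw [mon_eq_zero hj, mon_eq_zero (i := i + j) (by omega)]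
    funext r; simp [truncMul, h0]
  funext r
  simp only [truncMul, mon]
  rw [Finset.sum_eq_single (⟨i, by omega⟩ : Fin (m + 1)),
    Finset.sum_eq_single (⟨j, by omega⟩ : Fin (m + 1))]
  · simp
  · intro b _ hb
    have : j ≠ (b : ℕ) := fun e => hb (Fin.ext e.symm)
    simp [this, h0]
  · simp
  · intro b _ hb
    have : i ≠ (b : ℕ) := fun e => hb (Fin.ext e.symm)
    simp [this, h0']
  · simp

lemma isCompl_pi {ev od : Submodule K P} (h : IsCompl ev od) (m : ℕ) :
    IsCompl (Submodule.pi Set.univ fun _ : Fin (m + 1) => ev)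
      (Submodule.pi Set.univ fun _ : Fin (m + 1) => od) := by
  constructor
  · rw [Submodule.disjoint_def]
    intro f hf hg
    funext i
    exact Submodule.disjoint_def.1 h.disjoint _ (hf i trivial) (hg i trivial)
  · rw [codisjoint_iff, Submodule.eq_top_iff']
    intro f
    have hf : ∀ i, ∃ y ∈ ev, ∃ z ∈ od, y + z = f i := fun i =>
      Submodule.mem_sup.1 (by rw [codisjoint_iff.1 h.codisjoint]; trivial)
    choose y hy z hz hyz using hf
    exact Submodule.mem_sup.2 ⟨y, fun i _ => hy i, z, fun i _ => hz i, funext hyz⟩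

lemma truncMul_mem {A B C : Submodule K P} (h : ∀ a ∈ A, ∀ b ∈ B, mul a b ∈ C) (m : ℕ)
    (f : Fin (m + 1) → P) (hf : f ∈ Submodule.pi Set.univ fun _ : Fin (m + 1) => A)
    (g : Fin (m + 1) → P) (hg : g ∈ Submodule.pi Set.univ fun _ : Fin (m + 1) => B) :
    truncMul mul m f g ∈ Submodule.pi Set.univ fun _ : Fin (m + 1) => C := by
  intro r _
  refine Submodule.sum_mem _ fun i _ => Submodule.sum_mem _ fun j _ => ?_
  split_ifs
  exacts [h _ (hf i trivial) _ (hg j trivial), C.zero_mem]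

lemma truncMul_isSuperComm2 [CharP K 2] (h : IsSuperComm2 K ev od mul) (m : ℕ) :
    IsSuperComm2 K (Submodule.pi Set.univ fun _ : Fin (m + 1) => ev)
      (Submodule.pi Set.univ fun _ : Fin (m + 1) => od) (truncMul mul m) where
  compl := isCompl_pi h.compl m
  add_left := truncMul_add_left h m
  smul_left c f g := by
    funext r
    simp only [truncMul, Pi.smul_apply, Finset.smul_sum]
    refine Finset.sum_congr rfl fun i _ => Finset.sum_congr rfl fun j _ => ?_
    split_ifs
    · exact h.smul_left _ _ _
    · simp
  comm := truncMul_comm h m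
  assoc := by
    intro f g e
    revert f
    apply mon_induction_top K
    · intro f f' h1 h2
      simp only [truncMul_add_left h, h1, h2]
    intro i x
    revert g
    apply mon_induction_top K
    · intro f f' h1 h2
      simp only [truncMul_add_left h, truncMul_add_right h, h1, h2]
    intro j y
    revert e
    apply mon_induction_top K
    · intro f f' h1 h2
      simp only [truncMul_add_right h, h1, h2]
    intro l z
    simp only [truncMul_mon h, h.assoc, add_assoc]
  alt_od := by
    apply mon_induction
    · intro f _ g _ h1 h2
      rw [truncMul_add_left h, truncMul_add_right h, truncMul_add_right h, h1, h2,
        truncMul_comm h m g f]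
      simpa using add_self_of_char_two K _
    · intro i x hx
      rw [truncMul_mon h, h.alt_od x hx, mon_zero]
  grade_ee := truncMul_mem h.grade_ee m
  grade_eo := truncMul_mem h.grade_eo m
  grade_oo := truncMul_mem h.grade_oo m

end Mul

/-! ### Consequences of the axioms in characteristic 2 -/

section Axioms
variable {ev od : Submodule K P} {mul br : P → P → P} {sq : P → P}

lemma IsLieSuper2.add_right (h : IsLieSuper2 K ev od br sq) (x y z : P) :
    br x (y + z) = br x y + br x z := by
  rw [h.symm, h.add_left, h.symm y, h.symm z]

lemma exists_add (h : IsCompl ev od) (x : P) : ∃ y ∈ ev, ∃ z ∈ od, x = y + z := by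
  obtain ⟨y, hy, z, hz, e⟩ := Submodule.mem_sup.1
    (show x ∈ ev ⊔ od by rw [codisjoint_iff.1 h.codisjoint]; trivial)
  exact ⟨y, hy, z, hz, e.symm⟩

/-- The bracket of a Lie superalgebra in characteristic 2 is alternating: on odd elements
this is the polarization of the squaring at `x + x = 0`. -/
lemma IsLieSuper2.alt [CharP K 2] (h : IsLieSuper2 K ev od br sq) (x : P) : br x x = 0 := by
  have hod : ∀ x ∈ od, br x x = 0 := by
    intro x hx
    have h1 := h.sq_add x hx x hx
    have h2 := h.sq_smul 0 0 od.zero_mem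
    rw [add_self_of_char_two K x, add_self_of_char_two K (sq x)] at h1
    simp only [smul_zero, mul_zero, zero_smul] at h2
    simpa [h2] using h1.symm
  obtain ⟨y, hy, z, hz, rfl⟩ := exists_add h.compl x
  rw [h.add_left, h.add_right, h.add_right, h.alt_ev y hy, hod z hz, h.symm z y]
  simpa using add_self_of_char_two K _

/-- The Jacobi identity holds for all triples: with two even entries it is an axiom, with two
odd entries it is the polarization of `{s(x), z} = {x, {x, z}}`. -/
lemma IsLieSuper2.jacobi [CharP K 2] (h : IsLieSuper2 K ev od br sq) (x y z : P) :
    br (br x y) z + br x (br y z) + br y (br x z) = 0 := by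
  have two := fun w : P => add_self_of_char_two K w
  have hodd : ∀ x ∈ od, ∀ y ∈ od, ∀ z, br (br x y) z + br x (br y z) + br y (br x z) = 0 := by
    intro x hx y hy z
    have h1 := h.sq_jacobi (x + y) (od.add_mem hx hy) z
    rw [h.sq_add x hx y hy] at h1
    simp only [h.add_left, h.add_right, h.sq_jacobi x hx, h.sq_jacobi y hy] at h1
    linear_combination (norm := abel) h1 + two (br x (br y z)) + two (br y (br x z))
  have hev : ∀ x ∈ ev, ∀ y ∈ ev, ∀ z, br (br x y) z + br x (br y z) + br y (br x z) = 0 := by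
    intro x hx y hy z
    rw [h.jacobi_ev x hx y hy z]
    linear_combination (norm := abel) two (br x (br y z)) + two (br y (br x z))
  have hmix : ∀ x ∈ ev, ∀ y ∈ od, ∀ z, br (br x y) z + br x (br y z) + br y (br x z) = 0 := by
    intro x hx y hy z
    obtain ⟨z0, hz0, z1, hz1, rfl⟩ := exists_add h.compl z
    have e0 := hev x hx z0 hz0 y
    have e1 := hodd y hy z1 hz1 x
    rw [h.symm (br x z0) y, h.symm z0 y, h.symm z0 (br x y)] at e0
    rw [h.symm (br y z1) x, h.symm z1 x, h.symm y x, h.symm z1 (br x y)] at e1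
    simp only [h.add_right]
    linear_combination (norm := abel) e0 + e1
  have hmix' : ∀ x ∈ od, ∀ y ∈ ev, ∀ z, br (br x y) z + br x (br y z) + br y (br x z) = 0 := by
    intro x hx y hy z
    have e := hmix y hy x hx z
    rw [h.symm y x] at e
    linear_combination (norm := abel) e
  obtain ⟨x0, hx0, x1, hx1, rfl⟩ := exists_add h.compl x
  obtain ⟨y0, hy0, y1, hy1, rfl⟩ := exists_add h.compl y
  simp only [h.add_left, h.add_right]
  linear_combination (norm := abel) hev x0 hx0 y0 hy0 z + hodd x1 hx1 y1 hy1 z +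
    hmix x0 hx0 y1 hy1 z + hmix' x1 hx1 y0 hy0 z

/-- The undeformed pair `({-,-}, s)` is itself an even Poisson 2-cochain. -/
lemma IsPoisson2.cochain [CharP K 2] (h : IsPoisson2 K ev od mul br sq) :
    IsPoisson2Cochain2 K ev od mul br sq ∧ Cochain2Even K ev od br sq := by
  have hL := h.lieAlg
  have hA := h.commAlg
  refine ⟨⟨hL.add_left, hL.smul_left, hL.add_right, ?_, hL.alt, ?_, hL.sq_smul, hL.sq_add, ?_⟩,
    ?_, hL.sq_mem⟩
  · intro c x z
    rw [hL.symm, hL.smul_left, hL.symm]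
  · intro x y z
    rw [h.leibniz, hA.comm y]
  · intro x hx y hy
    rw [hA.comm x y, h.sq_mul y hy x hx, hL.symm]
  · intro b1 b2 x hx y hy
    cases b1 <;> cases b2
    · exact hL.grade_ee x hx y hy
    · exact hL.grade_eo x hx y hy
    · change br x y ∈ od
      rw [hL.symm]
      exact hL.grade_eo y hy x hx
    · exact hL.grade_oo x hx y hy

lemma IsPoisson2Cochain2.symm [CharP K 2] {φ : P → P → P} {ω : P → P}
    (h : IsPoisson2Cochain2 K ev od mul φ ω) (x y : P) : φ x y = φ y x := by
  have h1 := h.φ_alt (x + y)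
  rw [h.φ_add_left, h.φ_add_right, h.φ_add_right, h.φ_alt, h.φ_alt] at h1
  exact eq_of_add_eq_zero K (by simpa using h1)

end Axioms

/-! ### The deformed bracket and squaring -/

section Family
variable {ev od : Submodule K P} {mul : P → P → P} {m : ℕ} {μ : ℕ → P → P → P}
  {ωs : ℕ → P → P}

/-- The pairs `(μ_a, ω_a)`, `0 ≤ a ≤ m`, are all even Poisson 2-cochains. -/
def IsFamily (K : Type*) [Field K] {P : Type*} [AddCommGroup P] [Module K P]
    (ev od : Submodule K P) (mul : P → P → P) (m : ℕ) (μ : ℕ → P → P → P)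
    (ωs : ℕ → P → P) : Prop :=
  ∀ a, a ≤ m → IsPoisson2Cochain2 K ev od mul (μ a) (ωs a) ∧ Cochain2Even K ev od (μ a) (ωs a)

lemma le_of_mem_range {a m : ℕ} (h : a ∈ Finset.range (m + 1)) : a ≤ m := by
  simpa [Nat.lt_succ_iff] using h

lemma truncBr_add_left (h : IsFamily K ev od mul m μ ωs) (f f' g : Fin (m + 1) → P) :
    truncBr μ m (f + f') g = truncBr μ m f g + truncBr μ m f' g := by
  funext r
  simp only [truncBr, Pi.add_apply, ← Finset.sum_add_distrib]
  refine Finset.sum_congr rfl fun a ha => Finset.sum_congr rfl fun i _ =>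
    Finset.sum_congr rfl fun j _ => ?_
  split_ifs
  · exact (h a (le_of_mem_range ha)).1.φ_add_left _ _ _
  · simp

lemma truncBr_smul_left (h : IsFamily K ev od mul m μ ωs) (c : K) (f g : Fin (m + 1) → P) :
    truncBr μ m (c • f) g = c • truncBr μ m f g := by
  funext r
  simp only [truncBr, Pi.smul_apply, Finset.smul_sum]
  refine Finset.sum_congr rfl fun a ha => Finset.sum_congr rfl fun i _ =>
    Finset.sum_congr rfl fun j _ => ?_
  split_ifs
  · exact (h a (le_of_mem_range ha)).1.φ_smul_left _ _ _
  · simp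

lemma truncBr_symm [CharP K 2] (h : IsFamily K ev od mul m μ ωs) (f g : Fin (m + 1) → P) :
    truncBr μ m f g = truncBr μ m g f := by
  funext r
  simp only [truncBr]
  refine Finset.sum_congr rfl fun a ha => ?_
  rw [Finset.sum_comm]
  refine Finset.sum_congr rfl fun i _ => Finset.sum_congr rfl fun j _ => ?_
  rw [(h a (le_of_mem_range ha)).1.symm, add_right_comm]

lemma truncBr_add_right [CharP K 2] (h : IsFamily K ev od mul m μ ωs)
    (f g g' : Fin (m + 1) → P) :
    truncBr μ m f (g + g') = truncBr μ m f g + truncBr μ m f g' := by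
  rw [truncBr_symm h, truncBr_add_left h, truncBr_symm h g, truncBr_symm h g']

lemma truncBr_mon (h : IsFamily K ev od mul m μ ωs) (i j : ℕ) (x y : P) :
    truncBr μ m (mon m i x) (mon m j y) =
      ∑ a ∈ Finset.range (m + 1), mon m (a + i + j) (μ a x y) := by
  have h0 : ∀ a ≤ m, ∀ x, μ a x 0 = 0 := fun a ha x => zero_of_add ((h a ha).1.φ_add_right x)
  have h0' : ∀ a ≤ m, ∀ x, μ a 0 x = 0 := fun a ha x =>
    zero_of_add (f := fun y => μ a y x) fun y z => (h a ha).1.φ_add_left y z x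
  funext r
  simp only [truncBr, Finset.sum_apply]
  refine Finset.sum_congr rfl fun a ha => ?_
  replace ha := le_of_mem_range ha
  by_cases hi : m < i
  · rw [mon_eq_zero hi, mon_eq_zero (i := a + i + j) (by omega)]
    simp [h0' a ha]
  by_cases hj : m < j
  · rw [mon_eq_zero hj, mon_eq_zero (i := a + i + j) (by omega)]
    simp [h0 a ha]
  simp only [mon]
  rw [Finset.sum_eq_single (⟨i, by omega⟩ : Fin (m + 1)),
    Finset.sum_eq_single (⟨j, by omega⟩ : Fin (m + 1))]
  · simp
  · intro b _ hb
    have : j ≠ (b : ℕ) := fun e => hb (Fin.ext e.symm)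
    simp [this, h0 a ha]
  · simp
  · intro b _ hb
    have : i ≠ (b : ℕ) := fun e => hb (Fin.ext e.symm)
    simp [this, h0' a ha]
  · simp

lemma truncBr_self [CharP K 2] (h : IsFamily K ev od mul m μ ωs) :
    ∀ f : Fin (m + 1) → P, truncBr μ m f f = 0 := by
  apply mon_induction_top K
  · intro f g h1 h2
    rw [truncBr_add_left h, truncBr_add_right h, truncBr_add_right h, h1, h2,
      truncBr_symm h g f]
    simpa using add_self_of_char_two K _
  · intro i x
    rw [truncBr_mon h]
    refine Finset.sum_eq_zero fun a ha => ?_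
    rw [(h a (le_of_mem_range ha)).1.φ_alt, mon_zero]

lemma truncBr_mem {A B C : Submodule K P} (h : ∀ a ≤ m, ∀ x ∈ A, ∀ y ∈ B, μ a x y ∈ C)
    (f : Fin (m + 1) → P) (hf : f ∈ Submodule.pi Set.univ fun _ : Fin (m + 1) => A)
    (g : Fin (m + 1) → P) (hg : g ∈ Submodule.pi Set.univ fun _ : Fin (m + 1) => B) :
    truncBr μ m f g ∈ Submodule.pi Set.univ fun _ : Fin (m + 1) => C := by
  intro r _
  refine Submodule.sum_mem _ fun a ha => Submodule.sum_mem _ fun i _ =>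
    Submodule.sum_mem _ fun j _ => ?_
  split_ifs
  exacts [h a (le_of_mem_range ha) _ (hf i trivial) _ (hg j trivial), C.zero_mem]

lemma truncSq_mem (h : IsFamily K ev od mul m μ ωs)
    (f : Fin (m + 1) → P) (hf : f ∈ Submodule.pi Set.univ fun _ : Fin (m + 1) => od) :
    truncSq μ ωs m f ∈ Submodule.pi Set.univ fun _ : Fin (m + 1) => ev := by
  intro r _
  refine Submodule.add_mem _ ?_ ?_
  · refine Submodule.sum_mem _ fun a ha => Submodule.sum_mem _ fun i _ => ?_
    split_ifs
    exacts [(h a (le_of_mem_range ha)).2.2 _ (hf i trivial), ev.zero_mem]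
  · refine Submodule.sum_mem _ fun a ha => Submodule.sum_mem _ fun i _ =>
      Submodule.sum_mem _ fun j _ => ?_
    split_ifs
    exacts [(h a (le_of_mem_range ha)).2.1 true true _ (hf i trivial) _ (hf j trivial),
      ev.zero_mem]

lemma truncSq_smul (h : IsFamily K ev od mul m μ ωs) (c : K)
    (f : Fin (m + 1) → P) (hf : f ∈ Submodule.pi Set.univ fun _ : Fin (m + 1) => od) :
    truncSq μ ωs m (c • f) = (c * c) • truncSq μ ωs m f := by
  funext r
  simp only [truncSq, Pi.smul_apply, smul_add, Finset.smul_sum]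
  congr 1
  · refine Finset.sum_congr rfl fun a ha => Finset.sum_congr rfl fun i _ => ?_
    split_ifs
    · exact (h a (le_of_mem_range ha)).1.ω_smul _ _ (hf i trivial)
    · simp
  · refine Finset.sum_congr rfl fun a ha => Finset.sum_congr rfl fun i _ =>
      Finset.sum_congr rfl fun j _ => ?_
    have hc := (h a (le_of_mem_range ha)).1
    split_ifs
    · rw [hc.φ_smul_left, hc.φ_smul_right, smul_smul]
    · simp

lemma truncSq_add [CharP K 2] (h : IsFamily K ev od mul m μ ωs)
    (f : Fin (m + 1) → P) (hf : f ∈ Submodule.pi Set.univ fun _ : Fin (m + 1) => od)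
    (g : Fin (m + 1) → P) (hg : g ∈ Submodule.pi Set.univ fun _ : Fin (m + 1) => od) :
    truncSq μ ωs m (f + g) = truncSq μ ωs m f + truncSq μ ωs m g + truncBr μ m f g := by
  funext r
  simp only [truncSq, truncBr, Pi.add_apply]
  rw [add_add_add_comm, ← Finset.sum_add_distrib, ← Finset.sum_add_distrib,
    ← Finset.sum_add_distrib, ← Finset.sum_add_distrib, ← Finset.sum_add_distrib]
  refine Finset.sum_congr rfl fun a ha => ?_
  have hc := (h a (le_of_mem_range ha)).1
  -- The double sum in `truncBr` splits into its diagonal and its two triangles; the lower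
  -- triangle is reflected into the upper one.
  have split : (∑ i : Fin (m + 1), ∑ j : Fin (m + 1),
      if a + (i : ℕ) + (j : ℕ) = (r : ℕ) then μ a (f i) (g j) else 0) =
      (∑ i : Fin (m + 1), if a + 2 * (i : ℕ) = (r : ℕ) then μ a (f i) (g i) else 0) +
      ∑ i : Fin (m + 1), ∑ j : Fin (m + 1),
        if a + (i : ℕ) + (j : ℕ) = (r : ℕ) ∧ (i : ℕ) < (j : ℕ) then
          μ a (f i) (g j) + μ a (g i) (f j) else 0 := by
    have e1 : (∑ i : Fin (m + 1), ∑ j : Fin (m + 1),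
        if a + (i : ℕ) + (j : ℕ) = (r : ℕ) ∧ (i : ℕ) < (j : ℕ) then
          μ a (f i) (g j) + μ a (g i) (f j) else 0) =
        (∑ i : Fin (m + 1), ∑ j : Fin (m + 1),
          if a + (i : ℕ) + (j : ℕ) = (r : ℕ) ∧ (i : ℕ) < (j : ℕ) then μ a (f i) (g j) else 0) +
        ∑ i : Fin (m + 1), ∑ j : Fin (m + 1),
          if a + (i : ℕ) + (j : ℕ) = (r : ℕ) ∧ (j : ℕ) < (i : ℕ) then
            μ a (f i) (g j) else 0 := by
      rw [Finset.sum_comm (f := fun (i j : Fin (m + 1)) =>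
        if a + (i : ℕ) + (j : ℕ) = (r : ℕ) ∧ (j : ℕ) < (i : ℕ) then μ a (f i) (g j) else 0)]
      simp only [← Finset.sum_add_distrib]
      refine Finset.sum_congr rfl fun i _ => Finset.sum_congr rfl fun j _ => ?_
      rw [hc.symm (g i) (f j), add_right_comm a (j : ℕ) (i : ℕ)]
      split_ifs <;> simp
    have e2 : (∑ i : Fin (m + 1), if a + 2 * (i : ℕ) = (r : ℕ) then μ a (f i) (g i) else 0) =
        ∑ i : Fin (m + 1), ∑ j : Fin (m + 1),
          if a + (i : ℕ) + (j : ℕ) = (r : ℕ) ∧ (i : ℕ) = (j : ℕ) then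
            μ a (f i) (g j) else 0 := by
      refine Finset.sum_congr rfl fun i _ => ?_
      rw [Finset.sum_eq_single i]
      · rw [two_mul, add_assoc]
        simp
      · intro j _ hj
        have : (i : ℕ) ≠ (j : ℕ) := fun e => hj (Fin.ext e.symm)
        simp [this]
      · simp
    rw [e1, e2]
    simp only [← Finset.sum_add_distrib]
    refine Finset.sum_congr rfl fun i _ => Finset.sum_congr rfl fun j _ => ?_
    by_cases hr : a + (i : ℕ) + (j : ℕ) = (r : ℕ)
    · rcases lt_trichotomy (i : ℕ) (j : ℕ) with hl | hl | hl
      · simp [hr, hl, hl.ne, hl.not_gt]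
      · simp [hl]
      · simp [hr, hl, hl.ne', hl.not_gt]
    · simp [hr]
  rw [split]
  have d : (∑ i : Fin (m + 1), if a + 2 * (i : ℕ) = (r : ℕ) then ωs a (f i + g i) else 0) =
      (∑ i : Fin (m + 1), if a + 2 * (i : ℕ) = (r : ℕ) then ωs a (f i) else 0) +
      (∑ i : Fin (m + 1), if a + 2 * (i : ℕ) = (r : ℕ) then ωs a (g i) else 0) +
      ∑ i : Fin (m + 1), if a + 2 * (i : ℕ) = (r : ℕ) then μ a (f i) (g i) else 0 := by
    simp only [← Finset.sum_add_distrib]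
    refine Finset.sum_congr rfl fun i _ => ?_
    rw [hc.ω_polar _ (hf i trivial) _ (hg i trivial)]
    split_ifs <;> simp
  have o : (∑ i : Fin (m + 1), ∑ j : Fin (m + 1),
        if a + (i : ℕ) + (j : ℕ) = (r : ℕ) ∧ (i : ℕ) < (j : ℕ) then
          μ a (f i + g i) (f j + g j) else 0) =
      (∑ i : Fin (m + 1), ∑ j : Fin (m + 1),
        if a + (i : ℕ) + (j : ℕ) = (r : ℕ) ∧ (i : ℕ) < (j : ℕ) then μ a (f i) (f j) else 0) +
      (∑ i : Fin (m + 1), ∑ j : Fin (m + 1),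
        if a + (i : ℕ) + (j : ℕ) = (r : ℕ) ∧ (i : ℕ) < (j : ℕ) then μ a (g i) (g j) else 0) +
      ∑ i : Fin (m + 1), ∑ j : Fin (m + 1),
        if a + (i : ℕ) + (j : ℕ) = (r : ℕ) ∧ (i : ℕ) < (j : ℕ) then
          μ a (f i) (g j) + μ a (g i) (f j) else 0 := by
    simp only [← Finset.sum_add_distrib]
    refine Finset.sum_congr rfl fun i _ => Finset.sum_congr rfl fun j _ => ?_
    rw [hc.φ_add_left, hc.φ_add_right, hc.φ_add_right]
    split_ifs
    · abel
    · simp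
  rw [d, o]
  abel

lemma truncSq_mon (h : IsFamily K ev od mul m μ ωs) (i : ℕ) (x : P) :
    truncSq μ ωs m (mon m i x) =
      ∑ a ∈ Finset.range (m + 1), mon m (a + 2 * i) (ωs a x) := by
  have h0 : ∀ a ≤ m, ∀ x, μ a x 0 = 0 := fun a ha x => zero_of_add ((h a ha).1.φ_add_right x)
  have h0' : ∀ a ≤ m, ∀ x, μ a 0 x = 0 := fun a ha x =>
    zero_of_add (f := fun y => μ a y x) fun y z => (h a ha).1.φ_add_left y z x
  have hω : ∀ a ≤ m, ωs a 0 = 0 := by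
    intro a ha
    simpa using (h a ha).1.ω_smul 0 0 od.zero_mem
  funext r
  simp only [truncSq, Finset.sum_apply]
  rw [Finset.sum_eq_zero (s := Finset.range (m + 1)) (f := fun a => ∑ b : Fin (m + 1),
    ∑ c : Fin (m + 1), if a + (b : ℕ) + (c : ℕ) = (r : ℕ) ∧ (b : ℕ) < (c : ℕ) then
      μ a (mon m i x b) (mon m i x c) else 0), add_zero]
  · refine Finset.sum_congr rfl fun a ha => ?_
    replace ha := le_of_mem_range ha
    by_cases hi : m < i
    · rw [mon_eq_zero hi, mon_eq_zero (i := a + 2 * i) (by omega)]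
      simp [hω a ha]
    simp only [mon]
    rw [Finset.sum_eq_single (⟨i, by omega⟩ : Fin (m + 1))]
    · simp
    · intro b _ hb
      have : i ≠ (b : ℕ) := fun e => hb (Fin.ext e.symm)
      simp [this, hω a ha]
    · simp
  · intro a ha
    replace ha := le_of_mem_range ha
    refine Finset.sum_eq_zero fun b _ => Finset.sum_eq_zero fun c _ => ?_
    split_ifs with hbc
    · simp only [mon]
      by_cases hb : i = (b : ℕ)
      · have hc : i ≠ (c : ℕ) := by omega
        simp [hc, h0 a ha]
      · simp [hb, h0' a ha]
    · rfl

/-! ### The graded pieces of the Poisson identities -/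

lemma truncBr_sum_left (h : IsFamily K ev od mul m μ ωs) {ι : Type*} (s : Finset ι)
    (F : ι → Fin (m + 1) → P) (g : Fin (m + 1) → P) :
    truncBr μ m (∑ i ∈ s, F i) g = ∑ i ∈ s, truncBr μ m (F i) g :=
  sum_of_add (f := fun f => truncBr μ m f g) (fun f f' => truncBr_add_left h f f' g) s F

lemma truncBr_sum_right [CharP K 2] (h : IsFamily K ev od mul m μ ωs) {ι : Type*}
    (s : Finset ι) (f : Fin (m + 1) → P) (G : ι → Fin (m + 1) → P) :
    truncBr μ m f (∑ i ∈ s, G i) = ∑ i ∈ s, truncBr μ m f (G i) :=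
  sum_of_add (f := truncBr μ m f) (truncBr_add_right h f) s G

lemma truncMul_sum_right (h : IsSuperComm2 K ev od mul) {ι : Type*} (s : Finset ι)
    (f : Fin (m + 1) → P) (G : ι → Fin (m + 1) → P) :
    truncMul mul m f (∑ i ∈ s, G i) = ∑ i ∈ s, truncMul mul m f (G i) :=
  sum_of_add (f := truncMul mul m f) (truncMul_add_right h m f) s G

/-- A sum over pairs of indices of monomials, regrouped by total degree. -/
lemma sum_sum_mon' (c : ℕ) (e : ℕ → ℕ → ℕ) (F : ℕ → ℕ → P)
    (he : ∀ a b, e a b = b + a + c) :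
    ∑ a ∈ Finset.range (m + 1), ∑ b ∈ Finset.range (m + 1), mon m (e a b) (F b a) =
      ∑ n ∈ Finset.range (m + 1),
        mon m (n + c) (∑ p ∈ Finset.HasAntidiagonal.antidiagonal n, F p.1 p.2) := by
  rw [← sum_sum_mon, Finset.sum_comm]
  simp only [he]

/-- The Jacobi expression of three monomials is `∑ J_n(x, y, z) t^{n+i+j+l}`. -/
lemma truncBr_jac_mon [CharP K 2] (h : IsFamily K ev od mul m μ ωs) (i j l : ℕ) (x y z : P) :
    truncBr μ m (truncBr μ m (mon m i x) (mon m j y)) (mon m l z) +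
      truncBr μ m (mon m i x) (truncBr μ m (mon m j y) (mon m l z)) +
      truncBr μ m (mon m j y) (truncBr μ m (mon m i x) (mon m l z)) =
    ∑ n ∈ Finset.range (m + 1), mon m (n + (i + j + l)) (jac μ n x y z) := by
  simp only [truncBr_mon h, truncBr_sum_left h, truncBr_sum_right h]
  rw [sum_sum_mon' (i + j + l) (fun a b => b + (a + i + j) + l) (fun a b => μ a (μ b x y) z)
      (fun _ _ => by omega),
    sum_sum_mon' (i + j + l) (fun a b => b + i + (a + j + l)) (fun a b => μ a x (μ b y z))
      (fun _ _ => by omega),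
    sum_sum_mon' (i + j + l) (fun a b => b + j + (a + i + l)) (fun a b => μ a y (μ b x z))
      (fun _ _ => by omega)]
  simp only [← Finset.sum_add_distrib, ← mon_add, jac]

lemma truncSq_jac_mon [CharP K 2] (h : IsFamily K ev od mul m μ ωs) (i l : ℕ) (x z : P) :
    truncBr μ m (truncSq μ ωs m (mon m i x)) (mon m l z) +
      truncBr μ m (mon m i x) (truncBr μ m (mon m i x) (mon m l z)) =
    ∑ n ∈ Finset.range (m + 1), mon m (n + (2 * i + l)) (sqJac μ ωs n x z) := by
  simp only [truncBr_mon h, truncSq_mon h, truncBr_sum_left h, truncBr_sum_right h]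
  rw [sum_sum_mon' (2 * i + l) (fun a b => b + (a + 2 * i) + l) (fun a b => μ a (ωs b x) z)
      (fun _ _ => by omega),
    sum_sum_mon' (2 * i + l) (fun a b => b + i + (a + i + l)) (fun a b => μ a x (μ b x z))
      (fun _ _ => by omega)]
  simp only [← Finset.sum_add_distrib, ← mon_add, sqJac]

lemma truncBr_jacobi [CharP K 2] (h : IsFamily K ev od mul m μ ωs)
    (hJ : ∀ n ≤ m, ∀ x y z, jac μ n x y z = 0) (f g e : Fin (m + 1) → P) :
    truncBr μ m (truncBr μ m f g) e + truncBr μ m f (truncBr μ m g e) +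
      truncBr μ m g (truncBr μ m f e) = 0 := by
  revert f
  apply mon_induction_top K
  · intro f f' h1 h2
    simp only [truncBr_add_left h, truncBr_add_right h]
    linear_combination (norm := abel) h1 + h2
  intro i x
  revert g
  apply mon_induction_top K
  · intro f f' h1 h2
    simp only [truncBr_add_left h, truncBr_add_right h]
    linear_combination (norm := abel) h1 + h2
  intro j y
  revert e
  apply mon_induction_top K
  · intro f f' h1 h2
    simp only [truncBr_add_right h]
    linear_combination (norm := abel) h1 + h2
  intro l z
  rw [truncBr_jac_mon h]
  refine Finset.sum_eq_zero fun n hn => ?_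
  rw [hJ n (le_of_mem_range hn), mon_zero]

/-- Polarizing in `f` produces a Jacobi expression, so beyond the Jacobi identity only
monomials have to be checked. -/
lemma truncSq_jacobi [CharP K 2] (h : IsFamily K ev od mul m μ ωs)
    (hJ : ∀ n ≤ m, ∀ x y z, jac μ n x y z = 0)
    (hS : ∀ n ≤ m, ∀ x ∈ od, ∀ z, sqJac μ ωs n x z = 0) :
    ∀ f ∈ Submodule.pi Set.univ fun _ : Fin (m + 1) => od, ∀ g,
    truncBr μ m (truncSq μ ωs m f) g = truncBr μ m f (truncBr μ m f g) := by
  apply mon_induction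
  · intro f hf f' hf' h1 h2 g
    rw [truncSq_add h f hf f' hf']
    simp only [truncBr_add_left h, truncBr_add_right h, h1, h2]
    linear_combination (norm := abel) truncBr_jacobi h hJ f f' g -
      add_self_of_char_two K (truncBr μ m f (truncBr μ m f' g)) -
      add_self_of_char_two K (truncBr μ m f' (truncBr μ m f g))
  · intro i x hx
    apply mon_induction_top K
    · intro f f' h1 h2
      simp only [truncBr_add_right h, h1, h2]
    intro l z
    apply eq_of_add_eq_zero K
    rw [truncSq_jac_mon h]
    refine Finset.sum_eq_zero fun n hn => ?_
    rw [hS n (le_of_mem_range hn) x hx, mon_zero]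

lemma truncBr_leibniz [CharP K 2] (hA : IsSuperComm2 K ev od mul)
    (h : IsFamily K ev od mul m μ ωs) (f g e : Fin (m + 1) → P) :
    truncBr μ m (truncMul mul m f g) e =
      truncMul mul m f (truncBr μ m g e) + truncMul mul m g (truncBr μ m f e) := by
  revert f
  apply mon_induction_top K
  · intro f f' h1 h2
    simp only [truncBr_add_left h, truncMul_add_left hA, truncMul_add_right hA, h1, h2]
    abel
  intro i x
  revert g
  apply mon_induction_top K
  · intro f f' h1 h2
    simp only [truncBr_add_left h, truncMul_add_left hA, truncMul_add_right hA, h1, h2]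
    abel
  intro j y
  revert e
  apply mon_induction_top K
  · intro f f' h1 h2
    simp only [truncBr_add_right h, truncMul_add_right hA, h1, h2]
    abel
  intro l z
  simp only [truncBr_mon h, truncMul_mon hA, truncMul_sum_right hA, ← Finset.sum_add_distrib]
  refine Finset.sum_congr rfl fun a ha => ?_
  rw [(h a (le_of_mem_range ha)).1.φ_der, mon_add]
  congr 2 <;> omega

/-- The defect of this identity is additive in `f` and in `g`, by the Leibniz rule together
with `{f, f} = 0` and `g² = 0`, so it is enough to compare monomials. -/
lemma truncSq_mul [CharP K 2] (hA : IsSuperComm2 K ev od mul)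
    (h : IsFamily K ev od mul m μ ωs) :
    ∀ f ∈ Submodule.pi Set.univ fun _ : Fin (m + 1) => ev,
    ∀ g ∈ Submodule.pi Set.univ fun _ : Fin (m + 1) => od,
    truncSq μ ωs m (truncMul mul m f g) =
      truncMul mul m (truncMul mul m f f) (truncSq μ ωs m g) +
        truncMul mul m (truncMul mul m f g) (truncBr μ m f g) := by
  have hM := truncMul_isSuperComm2 hA m
  have two := fun w : Fin (m + 1) → P => add_self_of_char_two K w
  have lb := truncBr_leibniz hA h
  have lb' : ∀ f g e, truncBr μ m e (truncMul mul m f g) =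
      truncMul mul m f (truncBr μ m e g) + truncMul mul m g (truncBr μ m e f) := by
    intro f g e
    rw [truncBr_symm h, lb, truncBr_symm h g, truncBr_symm h f]
  apply mon_induction
  · intro f hf f' hf' h1 h2 g hg
    have sqg : truncMul mul m g g = 0 := hM.alt_od g hg
    have c : truncBr μ m (truncMul mul m f g) (truncMul mul m f' g) =
        truncMul mul m (truncMul mul m f g) (truncBr μ m f' g) +
        truncMul mul m (truncMul mul m f' g) (truncBr μ m f g) := by
      rw [lb, lb', lb', truncBr_self h, truncMul_add_right hA, truncMul_add_right hA,
        hM.mul_zero, hM.mul_zero, ← hM.assoc g g, sqg, hM.zero_mul, truncBr_symm h g f',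
        hM.comm f (truncMul mul m g _), hM.comm g (truncMul mul m f' _)]
      rw [hM.comm g (truncBr μ m f' g), hM.assoc, hM.comm g f, hM.assoc f' _ g,
        hM.comm (truncBr μ m f g) g, ← hM.assoc f' g, hM.comm (truncBr μ m f' g)]
      abel
    rw [truncMul_add_left hA, truncSq_add h _ (hM.grade_eo f hf g hg) _ (hM.grade_eo f' hf' g hg),
      h1 g hg, h2 g hg, c]
    simp only [truncMul_add_left hA, truncMul_add_right hA, truncBr_add_left h]
    rw [hM.comm f' f]
    linear_combination (norm := abel)
      (-1 : ℤ) • two (truncMul mul m (truncMul mul m f f') (truncSq μ ωs m g))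
  intro i x hx
  apply mon_induction
  · intro g hg g' hg' h1 h2
    have hf := mon_mem ev m i hx
    set f := mon m i x
    have c : truncBr μ m (truncMul mul m f g) (truncMul mul m f g') =
        truncMul mul m (truncMul mul m f f) (truncBr μ m g g') +
        truncMul mul m (truncMul mul m f g) (truncBr μ m f g') +
        truncMul mul m (truncMul mul m f g') (truncBr μ m f g) := by
      rw [lb, lb', lb', truncBr_self h, truncMul_add_right hA, truncMul_add_right hA,
        hM.mul_zero, hM.mul_zero, ← hM.assoc f f, ← hM.assoc f g', ← hM.assoc g f,
        hM.comm g f, truncBr_symm h g f]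
      abel
    rw [truncMul_add_right hA, truncSq_add h _ (hM.grade_eo f hf g hg) _
      (hM.grade_eo f hf g' hg'), h1, h2, c, truncSq_add h g hg g' hg']
    simp only [truncMul_add_left hA, truncMul_add_right hA, truncBr_add_right h]
    abel
  intro j y hy
  simp only [truncBr_mon h, truncMul_mon hA, truncSq_mon h, truncMul_sum_right hA,
    ← Finset.sum_add_distrib]
  refine Finset.sum_congr rfl fun a ha => ?_
  have hc := (h a (le_of_mem_range ha)).1
  rw [hA.comm x y, hc.ω_mul y hy x hx, hc.symm y x, mon_add]
  congr 2 <;> omega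

/-- The truncated structure is a Poisson superalgebra exactly when the graded pieces of the
Jacobi identity and of its squaring analogue vanish up to degree `m`: all the other axioms
hold because the coefficients are Poisson cochains. -/
lemma isPoisson2_trunc_iff [CharP K 2] (hA : IsSuperComm2 K ev od mul)
    (h : IsFamily K ev od mul m μ ωs) :
    IsPoisson2 K
      (Submodule.pi Set.univ fun _ : Fin (m + 1) => ev)
      (Submodule.pi Set.univ fun _ : Fin (m + 1) => od)
      (truncMul mul m) (truncBr μ m) (truncSq μ ωs m) ↔
    (∀ n ≤ m, ∀ x y z, jac μ n x y z = 0) ∧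
      ∀ n ≤ m, ∀ x ∈ od, ∀ z, sqJac μ ωs n x z = 0 := by
  have coeff : ∀ (G : ℕ → P) (n : ℕ), n ≤ m →
      (∑ a ∈ Finset.range (m + 1), mon m (a + 0) (G a)) = 0 → G n = 0 := by
    intro G n hn hG
    have := congrFun hG ⟨n, by omega⟩
    rw [Finset.sum_apply] at this
    simp only [mon, add_zero, Finset.sum_ite_eq', Finset.mem_range, Pi.zero_apply] at this
    rwa [if_pos (by omega)] at this
  constructor
  · intro hT
    refine ⟨fun n hn x y z => ?_, fun n hn x hx z => ?_⟩
    · refine coeff (fun n => jac μ n x y z) n hn ?_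
      rw [← hT.lieAlg.jacobi (mon m 0 x) (mon m 0 y) (mon m 0 z), truncBr_jac_mon h]
    · refine coeff (fun n => sqJac μ ωs n x z) n hn ?_
      have := truncSq_jac_mon h 0 0 x z
      rw [hT.lieAlg.sq_jacobi _ (mon_mem od m 0 hx), add_self_of_char_two K] at this
      exact this.symm
  · rintro ⟨hJ, hS⟩
    refine ⟨truncMul_isSuperComm2 hA m, ?_, ?_, truncSq_mul hA h⟩
    · exact
        { compl := isCompl_pi hA.compl m
          add_left := truncBr_add_left h
          smul_left := truncBr_smul_left h
          symm := truncBr_symm h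
          alt_ev := fun f _ => truncBr_self h f
          grade_ee := truncBr_mem fun a ha => (h a ha).2.1 false false
          grade_eo := truncBr_mem fun a ha => (h a ha).2.1 false true
          grade_oo := truncBr_mem fun a ha => (h a ha).2.1 true true
          jacobi_ev := by
            intro f _ g _ e
            apply eq_of_add_eq_zero K
            rw [← add_assoc]
            exact truncBr_jacobi h hJ f g e
          sq_mem := truncSq_mem h
          sq_smul := truncSq_smul h
          sq_add := truncSq_add h
          sq_jacobi := truncSq_jacobi h hJ hS }
    · intro f g e
      rw [truncBr_leibniz hA h, truncMul_comm hA m g]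

end Family

/-! ### The coefficient of top degree -/

lemma sum_antidiagonal_succ_ends (k : ℕ) (F : ℕ → ℕ → P) :
    ∑ p ∈ Finset.HasAntidiagonal.antidiagonal (k + 1), F p.1 p.2 =
      F 0 (k + 1) + F (k + 1) 0 + ∑ i ∈ Finset.Icc 1 k, F i (k + 1 - i) := by
  rw [Finset.Nat.sum_antidiagonal_eq_sum_range_succ F, Finset.sum_range_succ,
    Finset.sum_range_succ', show Finset.Icc 1 k = Finset.Ico 1 (k + 1) by ext; simp,
    Finset.sum_Ico_eq_sum_range]
  simp only [Nat.sub_zero, Nat.sub_self, Nat.add_sub_cancel, add_comm 1]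
  abel

end TruncationLemmas

/-- A formal deformation of order `k` of a Poisson superalgebra `P`
in characteristic 2 extends, by an even Poisson 2-cochain `(μ_{k+1}, ω_{k+1})`, to a
deformation of order `k+1` if and only if the obstruction `(Obs¹_{k+1}, Obs²_{k+1})`
equals the Poisson coboundary `d²(μ_{k+1}, ω_{k+1})`. -/
theorem deformation_extends_iff_obstruction_is_coboundary
    {K P : Type*} [Field K] [CharP K 2] [AddCommGroup P] [Module K P]
    (ev od : Submodule K P) (mul br : P → P → P) (sq : P → P)
    (hP : IsPoisson2 K ev od mul br sq)
    (k : ℕ) (hk : 1 ≤ k) (μ : ℕ → P → P → P) (ωs : ℕ → P → P)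
    (hdef : IsDeformation K ev od mul br sq k μ ωs)
    (μnew : P → P → P) (ωnew : P → P)
    (hnew : IsPoisson2Cochain2 K ev od mul μnew ωnew ∧ Cochain2Even K ev od μnew ωnew) :
    IsDeformation K ev od mul br sq (k + 1)
        (fun i => if i = k + 1 then μnew else μ i)
        (fun i => if i = k + 1 then ωnew else ωs i) ↔
      ((∀ x y z : P,
        (∑ i ∈ Finset.Icc 1 k,
          (μ i x (μ (k + 1 - i) y z) + μ i y (μ (k + 1 - i) z x) +
            μ i z (μ (k + 1 - i) x y))) =
        br x (μnew y z) + br y (μnew x z) + br z (μnew x y) +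
          μnew (br x y) z + μnew (br x z) y + μnew (br y z) x) ∧
      (∀ x ∈ od, ∀ z : P,
        (∑ i ∈ Finset.Icc 1 k,
          (μ i z (ωs (k + 1 - i) x) + μ i x (μ (k + 1 - i) x z))) =
        br x (μnew x z) + br z (ωnew x) + μnew (sq x) z + μnew (br x z) x)) := by
  have hbase := hP.cochain
  have hA := hP.commAlg
  have two := fun w : P => add_self_of_char_two K w
  obtain ⟨rfl, rfl, hcoch, htrunc⟩ := hdef
  set μ' : ℕ → P → P → P := fun i => if i = k + 1 then μnew else μ i with hμ'
  set ωs' : ℕ → P → P := fun i => if i = k + 1 then ωnew else ωs i with hωs'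
  have hμ'le : ∀ i ≤ k, μ' i = μ i := fun i hi => if_neg (by omega)
  have hωs'le : ∀ i ≤ k, ωs' i = ωs i := fun i hi => if_neg (by omega)
  have hμ'top : μ' (k + 1) = μnew := if_pos rfl
  have hωs'top : ωs' (k + 1) = ωnew := if_pos rfl
  have hF : IsFamily K ev od mul k μ ωs := by
    intro a ha
    rcases Nat.eq_zero_or_pos a with rfl | hpos
    · exact hbase
    · exact hcoch a hpos ha
  have hF' : IsFamily K ev od mul (k + 1) μ' ωs' := by
    intro a ha
    rcases Nat.lt_or_eq_of_le ha with hlt | rfl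
    · rw [hμ'le a (by omega), hωs'le a (by omega)]
      exact hF a (by omega)
    · rw [hμ'top, hωs'top]
      exact hnew
  have hold := (isPoisson2_trunc_iff hA hF).1 htrunc
  have hjac : ∀ n ≤ k, ∀ x y z, jac μ' n x y z = 0 := by
    intro n hn x y z
    rw [← hold.1 n hn x y z]
    refine Finset.sum_congr rfl fun p hp => ?_
    have := Finset.HasAntidiagonal.mem_antidiagonal.1 hp
    rw [hμ'le p.1 (by omega), hμ'le p.2 (by omega)]
  have hsq : ∀ n ≤ k, ∀ x ∈ od, ∀ z, sqJac μ' ωs' n x z = 0 := by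
    intro n hn x hx z
    rw [← hold.2 n hn x hx z]
    refine Finset.sum_congr rfl fun p hp => ?_
    have := Finset.HasAntidiagonal.mem_antidiagonal.1 hp
    rw [hμ'le p.1 (by omega), hμ'le p.2 (by omega), hωs'le p.2 (by omega)]
  have hsymm : ∀ i ≤ k, ∀ x y, μ i x y = μ i y x := fun i hi => (hF i hi).1.symm
  -- In degree `k + 1` the outer terms of the Jacobi sum are the coboundary, the inner
  -- ones the obstruction.
  have hjtop : ∀ x y z, jac μ' (k + 1) x y z =
      (∑ i ∈ Finset.Icc 1 k,
          (μ i x (μ (k + 1 - i) y z) + μ i y (μ (k + 1 - i) z x) +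
            μ i z (μ (k + 1 - i) x y))) +
        (μ 0 x (μnew y z) + μ 0 y (μnew x z) + μ 0 z (μnew x y) +
          μnew (μ 0 x y) z + μnew (μ 0 x z) y + μnew (μ 0 y z) x) := by
    intro x y z
    rw [jac, sum_antidiagonal_succ_ends k
      (fun a b => μ' a (μ' b x y) z + μ' a x (μ' b y z) + μ' a y (μ' b x z))]
    simp only [hμ'top, hμ'le 0 (Nat.zero_le k)]
    rw [add_comm]
    congr 1
    · refine Finset.sum_congr rfl fun i hi => ?_
      rw [Finset.mem_Icc] at hi
      rw [hμ'le i (by omega), hμ'le (k + 1 - i) (by omega), hsymm i (by omega) _ z,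
        hsymm (k + 1 - i) (by omega) z x]
      abel
    · rw [hsymm 0 (Nat.zero_le k) _ z, hnew.1.symm x (μ 0 y z), hnew.1.symm y (μ 0 x z)]
      abel
  have hsqtop : ∀ x z, sqJac μ' ωs' (k + 1) x z =
      (∑ i ∈ Finset.Icc 1 k,
          (μ i z (ωs (k + 1 - i) x) + μ i x (μ (k + 1 - i) x z))) +
        (μ 0 x (μnew x z) + μ 0 z (ωnew x) + μnew (ωs 0 x) z + μnew (μ 0 x z) x) := by
    intro x z
    rw [sqJac, sum_antidiagonal_succ_ends k
      (fun a b => μ' a (ωs' b x) z + μ' a x (μ' b x z))]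
    simp only [hμ'top, hωs'top, hμ'le 0 (Nat.zero_le k), hωs'le 0 (Nat.zero_le k)]
    rw [add_comm]
    congr 1
    · refine Finset.sum_congr rfl fun i hi => ?_
      rw [Finset.mem_Icc] at hi
      rw [hμ'le i (by omega), hμ'le (k + 1 - i) (by omega), hωs'le (k + 1 - i) (by omega),
        hsymm i (by omega) _ z]
    · rw [hsymm 0 (Nat.zero_le k) _ z, hnew.1.symm x (μ 0 x z)]
      abel
  have hdef' : IsDeformation K ev od mul (μ 0) (ωs 0) (k + 1) μ' ωs' ↔
      (∀ n ≤ k + 1, ∀ x y z, jac μ' n x y z = 0) ∧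
        ∀ n ≤ k + 1, ∀ x ∈ od, ∀ z, sqJac μ' ωs' n x z = 0 := by
    rw [← isPoisson2_trunc_iff hA hF']
    exact ⟨fun h => h.2.2.2, fun h => ⟨hμ'le 0 (Nat.zero_le k), hωs'le 0 (Nat.zero_le k),
      fun i _ hi => hF' i hi, h⟩⟩
  rw [hdef']
  constructor
  · rintro ⟨hJ, hS⟩
    exact ⟨fun x y z => eq_of_add_eq_zero K ((hjtop x y z).symm.trans (hJ _ le_rfl x y z)),
      fun x hx z => eq_of_add_eq_zero K ((hsqtop x z).symm.trans (hS _ le_rfl x hx z))⟩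
  · rintro ⟨h1, h2⟩
    refine ⟨fun n hn x y z => ?_, fun n hn x hx z => ?_⟩
    · rcases Nat.lt_or_eq_of_le hn with hlt | rfl
      · exact hjac n (by omega) x y z
      · rw [hjtop, h1]
        exact two _
    · rcases Nat.lt_or_eq_of_le hn with hlt | rfl
      · exact hsq n (by omega) x hx z
      · rw [hsqtop, h2 x hx]
        exact two _
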